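/- Let q̲ = min_i q_i and q̄ = max_i q_i, and set F_{q̲} = q̲ I + (1 − q̲) F₀ and F_{q̄} = q̄ I + (1 − q̄) F₀. All three matrices F_{q̲}, F_Q, F_{q̄} have only real eigenvalues, and if for each of them the n eigenvalues (counted with multiplicity) are listed in decreasing order, then for every index i the i-th eigenvalue of F_{q̲} is less than or equal to the i-th eigenvalue of F_Q, which in turn is less than or equal to the i-th eigenvalue of F_{q̄}. -/

import Mathlib

open Matrix

/-!
With `L = D - A` the graph Laplacian, `F_Q = 1 - W L` where `W = (1 - Q) D⁻¹` is diagonal and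
decreases as `Q` increases. Since `L = Bᴴ B` is positive semidefinite, `F_Q` has the characteristic
polynomial of the symmetric matrix `1 - B W Bᴴ`, which increases with `Q` in the Loewner order, and
by Weyl's monotonicity principle so does each of its ordered eigenvalues.
-/

section SortedRoots

/-- The polynomial `p` has exactly the real roots `a 0 ≥ a 1 ≥ ⋯ ≥ a (k - 1)` in `𝕜`, counted with
multiplicity. For a characteristic polynomial this is the decreasing list of eigenvalues. -/
structure IsDecreasingRootList {𝕜 : Type*} [RCLike 𝕜] {k : ℕ} (p : Polynomial 𝕜)
    (a : Fin k → ℝ) : Prop where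
  antitone : Antitone a
  roots_eq : p.roots = Finset.univ.val.map fun i ↦ (a i : 𝕜)

theorem eq_of_antitone_of_map_univ_eq {α : Type*} [PartialOrder α] {k : ℕ} {a b : Fin k → α}
    (ha : Antitone a) (hb : Antitone b)
    (hab : Finset.univ.val.map a = Finset.univ.val.map b) : a = b := by
  rw [Fin.univ_val_map, Fin.univ_val_map, Multiset.coe_eq_coe] at hab
  exact List.ofFn_injective (hab.eq_of_sortedGE ha.sortedGE_ofFn hb.sortedGE_ofFn)

theorem IsDecreasingRootList.unique {𝕜 : Type*} [RCLike 𝕜] {k : ℕ} {p : Polynomial 𝕜}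
    {a b : Fin k → ℝ} (ha : IsDecreasingRootList p a) (hb : IsDecreasingRootList p b) : a = b := by
  have hroots := congrArg (Multiset.map RCLike.re) (ha.roots_eq.symm.trans hb.roots_eq)
  simp only [Multiset.map_map, Function.comp_def, RCLike.ofReal_re] at hroots
  exact eq_of_antitone_of_map_univ_eq ha.antitone hb.antitone hroots

end SortedRoots

section Weyl

variable {𝕜 E : Type*} [RCLike 𝕜] [NormedAddCommGroup E] [InnerProductSpace 𝕜 E]

theorem exists_ne_zero_repr_eq_zero_of_lt {K V ι : Type*} [DivisionRing K] [AddCommGroup V]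
    [Module K V] [Finite ι] [LinearOrder ι] (e f : Module.Basis ι K V) (i : ι) :
    ∃ x ≠ 0, (∀ j, i < j → e.repr x j = 0) ∧ ∀ j < i, f.repr x j = 0 := by
  -- The conditions are one linear equation for each `j ≠ i`, one fewer than the dimension.
  let φ : V →ₗ[K] ({j // j ≠ i} → K) :=
    LinearMap.pi fun j ↦ if i < j.1 then e.coord j.1 else f.coord j.1
  have := Module.Finite.of_basis e
  have := Fintype.ofFinite ι
  have hdim : Module.finrank K ({j // j ≠ i} → K) < Module.finrank K V := by
    rw [Module.finrank_fintype_fun_eq_card, Module.finrank_eq_card_basis e]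
    exact Fintype.card_subtype_lt (x := i) (by simp)
  obtain ⟨x, hφx, hx⟩ :=
    (Submodule.ne_bot_iff _).mp (LinearMap.ker_ne_bot_of_finrank_lt (f := φ) hdim)
  have hcoord (j : {j // j ≠ i}) : (if i < j.1 then e.coord j.1 else f.coord j.1) x = 0 :=
    congrFun (LinearMap.mem_ker.mp hφx) j
  refine ⟨x, hx, fun j hij ↦ ?_, fun j hji ↦ ?_⟩
  · simpa [hij] using hcoord ⟨j, hij.ne'⟩
  · simpa [hji.not_gt] using hcoord ⟨j, hji.ne⟩

variable [FiniteDimensional 𝕜 E] {S T : E →ₗ[𝕜] E} {n k : ℕ}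

theorem re_inner_apply_self_eq_sum_eigenvalues (hT : T.IsSymmetric)
    (hn : Module.finrank 𝕜 E = n) (x : E) :
    RCLike.re (inner 𝕜 x (T x)) =
      ∑ j, hT.eigenvalues hn j * ‖(hT.eigenvectorBasis hn).repr x j‖ ^ 2 := by
  rw [← (hT.eigenvectorBasis hn).repr.inner_map_map, PiLp.inner_apply, map_sum]
  refine Finset.sum_congr rfl fun j _ ↦ ?_
  rw [hT.eigenvectorBasis_apply_self_apply, RCLike.inner_apply, mul_assoc, RCLike.mul_conj]
  norm_cast

theorem eigenvalue_mul_norm_sq_le_re_inner (hT : T.IsSymmetric) (hn : Module.finrank 𝕜 E = n)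
    {i : Fin n} {x : E} (hx : ∀ j, i < j → (hT.eigenvectorBasis hn).repr x j = 0) :
    hT.eigenvalues hn i * ‖x‖ ^ 2 ≤ RCLike.re (inner 𝕜 x (T x)) := by
  rw [re_inner_apply_self_eq_sum_eigenvalues hT hn, ← (hT.eigenvectorBasis hn).repr.norm_map x,
    EuclideanSpace.norm_sq_eq, Finset.mul_sum]
  refine Finset.sum_le_sum fun j _ ↦ ?_
  rcases lt_or_ge i j with hij | hji
  · simp [hx j hij]
  · gcongr
    exact hT.eigenvalues_antitone hn hji

theorem re_inner_le_eigenvalue_mul_norm_sq (hT : T.IsSymmetric) (hn : Module.finrank 𝕜 E = n)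
    {i : Fin n} {x : E} (hx : ∀ j < i, (hT.eigenvectorBasis hn).repr x j = 0) :
    RCLike.re (inner 𝕜 x (T x)) ≤ hT.eigenvalues hn i * ‖x‖ ^ 2 := by
  rw [re_inner_apply_self_eq_sum_eigenvalues hT hn, ← (hT.eigenvectorBasis hn).repr.norm_map x,
    EuclideanSpace.norm_sq_eq, Finset.mul_sum]
  refine Finset.sum_le_sum fun j _ ↦ ?_
  rcases lt_or_ge j i with hji | hij
  · simp [hx j hji]
  · gcongr
    exact hT.eigenvalues_antitone hn hij

theorem eigenvalues_le_eigenvalues_of_le (hS : S.IsSymmetric) (hT : T.IsSymmetric) (hST : S ≤ T)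
    (hn : Module.finrank 𝕜 E = n) (i : Fin n) : hS.eigenvalues hn i ≤ hT.eigenvalues hn i := by
  obtain ⟨x, hx, hSx, hTx⟩ := exists_ne_zero_repr_eq_zero_of_lt
    (hS.eigenvectorBasis hn).toBasis (hT.eigenvectorBasis hn).toBasis i
  have hquad : RCLike.re (inner 𝕜 x (S x)) ≤ RCLike.re (inner 𝕜 x (T x)) := by
    have := ((LinearMap.le_def S T).mp hST).re_inner_nonneg_right x
    rwa [LinearMap.sub_apply, inner_sub_right, map_sub, sub_nonneg] at this
  have hbounds : hS.eigenvalues hn i * ‖x‖ ^ 2 ≤ hT.eigenvalues hn i * ‖x‖ ^ 2 :=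
    calc hS.eigenvalues hn i * ‖x‖ ^ 2
      _ ≤ RCLike.re (inner 𝕜 x (S x)) := eigenvalue_mul_norm_sq_le_re_inner hS hn hSx
      _ ≤ RCLike.re (inner 𝕜 x (T x)) := hquad
      _ ≤ hT.eigenvalues hn i * ‖x‖ ^ 2 := re_inner_le_eigenvalue_mul_norm_sq hT hn hTx
  exact le_of_mul_le_mul_right hbounds (by positivity)

theorem isDecreasingRootList_eigenvalues (hT : T.IsSymmetric) (hn : Module.finrank 𝕜 E = n) :
    IsDecreasingRootList T.charpoly (hT.eigenvalues hn) :=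
  ⟨hT.eigenvalues_antitone hn, hT.roots_charpoly_eq_eigenvalues hn⟩

theorem finrank_eq_of_isDecreasingRootList_charpoly (hT : T.IsSymmetric) {a : Fin k → ℝ}
    (ha : IsDecreasingRootList T.charpoly a) : Module.finrank 𝕜 E = k := by
  rw [← T.charpoly_natDegree, hT.splits_charpoly.natDegree_eq_card_roots, ha.roots_eq]
  simp

theorem IsDecreasingRootList.le_of_isSymmetric_of_le (hS : S.IsSymmetric) (hT : T.IsSymmetric)
    (hST : S ≤ T) {a b : Fin k → ℝ} (ha : IsDecreasingRootList S.charpoly a)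
    (hb : IsDecreasingRootList T.charpoly b) : a ≤ b := by
  have hk := finrank_eq_of_isDecreasingRootList_charpoly hS ha
  rw [ha.unique (isDecreasingRootList_eigenvalues hS hk),
    hb.unique (isDecreasingRootList_eigenvalues hT hk)]
  exact eigenvalues_le_eigenvalues_of_le hS hT hST hk

end Weyl

section MatrixProducts

open scoped ComplexOrder MatrixOrder

variable {𝕜 V : Type*} [RCLike 𝕜] [Fintype V] [DecidableEq V] {k : ℕ}

theorem charpoly_toEuclideanLin (M : Matrix V V 𝕜) :
    M.toEuclideanLin.charpoly = M.charpoly := by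
  rw [toEuclideanLin, toLpLin_eq_toLin, charpoly_toLin]

theorem IsDecreasingRootList.le_of_isHermitian_of_le {S T : Matrix V V 𝕜} (hS : S.IsHermitian)
    (hT : T.IsHermitian) (hST : S ≤ T) {a b : Fin k → ℝ}
    (ha : IsDecreasingRootList S.charpoly a) (hb : IsDecreasingRootList T.charpoly b) : a ≤ b := by
  refine le_of_isSymmetric_of_le (isSymmetric_toEuclideanLin_iff.mpr hS)
    (isSymmetric_toEuclideanLin_iff.mpr hT) ?_ ?_ ?_
  · rw [LinearMap.le_def, ← map_sub]
    exact isPositive_toEuclideanLin_iff.mpr hST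
  · rwa [charpoly_toEuclideanLin]
  · rwa [charpoly_toEuclideanLin]

theorem charpoly_one_sub_mul_comm {R : Type*} [CommRing R] (M N : Matrix V V R) :
    (1 - M * N).charpoly = (1 - N * M).charpoly := by
  have hshift (X Y : Matrix V V R) : 1 - X * Y = (-X) * Y - scalar V (-1) := by
    rw [map_neg, map_one]
    noncomm_ring
  rw [hshift, hshift, charpoly_sub_scalar, charpoly_sub_scalar, charpoly_mul_comm, mul_neg, neg_mul]

variable {L W Z : Matrix V V 𝕜}

theorem isHermitian_one_sub_mul_mul_conjTranspose (hW : W.IsHermitian) (B : Matrix V V 𝕜) :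
    (1 - B * W * Bᴴ).IsHermitian :=
  isHermitian_one.sub (isHermitian_mul_mul_conjTranspose B hW)

theorem charpoly_one_sub_mul_conjTranspose_mul_self (W B : Matrix V V 𝕜) :
    (1 - W * (Bᴴ * B)).charpoly = (1 - B * W * Bᴴ).charpoly := by
  rw [← mul_assoc, charpoly_one_sub_mul_comm, ← mul_assoc]

theorem splits_charpoly_one_sub_mul_posSemidef (hW : W.IsHermitian) (hL : L.PosSemidef) :
    (1 - W * L).charpoly.Splits := by
  obtain ⟨B, rfl⟩ := CStarAlgebra.nonneg_iff_eq_star_mul_self.mp hL.nonneg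
  rw [star_eq_conjTranspose, charpoly_one_sub_mul_conjTranspose_mul_self]
  exact (isHermitian_one_sub_mul_mul_conjTranspose hW B).splits_charpoly

theorem IsDecreasingRootList.le_of_one_sub_mul_posSemidef (hW : W.IsHermitian)
    (hZ : Z.IsHermitian) (hWZ : W ≤ Z) (hL : L.PosSemidef) {a b : Fin k → ℝ}
    (ha : IsDecreasingRootList (1 - Z * L).charpoly a)
    (hb : IsDecreasingRootList (1 - W * L).charpoly b) : a ≤ b := by
  obtain ⟨B, rfl⟩ := CStarAlgebra.nonneg_iff_eq_star_mul_self.mp hL.nonneg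
  rw [star_eq_conjTranspose, charpoly_one_sub_mul_conjTranspose_mul_self] at ha hb
  refine le_of_isHermitian_of_le (isHermitian_one_sub_mul_mul_conjTranspose hZ B)
    (isHermitian_one_sub_mul_mul_conjTranspose hW B) ?_ ha hb
  exact sub_le_sub_left (star_right_conjugate_le_conjugate hWZ B) 1

theorem im_eq_zero_of_splits_charpoly {F : Matrix V V ℝ} (hF : F.charpoly.Splits) {μ : ℂ}
    (hμ : ∃ v : V → ℂ, v ≠ 0 ∧ (F.map Complex.ofReal).mulVec v = μ • v) : μ.im = 0 := by
  obtain ⟨v, hv, hFv⟩ := hμ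
  have hroot : (F.charpoly.map Complex.ofRealHom).IsRoot μ := by
    rw [← charpoly_map, Polynomial.IsRoot, eval_charpoly, ← exists_mulVec_eq_zero_iff]
    refine ⟨v, hv, ?_⟩
    rw [sub_mulVec, sub_eq_zero, scalar_apply, ← smul_one_eq_diagonal, smul_mulVec, one_mulVec]
    exact hFv.symm
  obtain ⟨t, rfl⟩ := hF.mem_range_of_isRoot F.charpoly_monic.ne_zero hroot
  exact Complex.ofReal_im t

end MatrixProducts

section WeightedWalk

variable {V : Type*} [Fintype V] [DecidableEq V]

/-- The matrix `F_Q = Q + (1 - Q) D⁻¹ A` with `Q = diagonal q` and `D = diagonal d`. When `A` is an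
adjacency matrix and `d` the degrees, it is the random walk that stays at `v` with weight `q v`. If
some `d v` is zero, the matrix inverse `D⁻¹` is the junk value `0`. -/
noncomputable def lazyWalkMatrix {K : Type*} [Field K] (d : V → K) (A : Matrix V V K) (q : V → K) :
    Matrix V V K :=
  diagonal q + (1 - diagonal q) * ((diagonal d)⁻¹ * A)

theorem lazyWalkMatrix_const {K : Type*} [Field K] (d : V → K) (A : Matrix V V K) (t : K) :
    lazyWalkMatrix d A (fun _ ↦ t) =
      t • (1 : Matrix V V K) + (1 - t) • ((diagonal d)⁻¹ * A) := by
  rw [lazyWalkMatrix, ← smul_one_eq_diagonal, sub_mul, sub_smul]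
  simp

theorem lazyWalkMatrix_eq_one_sub {K : Type*} [Field K] {d : V → K} (hd : ∀ v, d v ≠ 0)
    (A : Matrix V V K) (q : V → K) :
    lazyWalkMatrix d A q = 1 - diagonal (fun v ↦ (1 - q v) / d v) * (diagonal d - A) := by
  have hinv : (diagonal d)⁻¹ = diagonal d⁻¹ :=
    inv_eq_left_inv (by simp [diagonal_mul_diagonal, hd])
  have hQ : 1 - diagonal q = diagonal fun v ↦ 1 - q v := by
    rw [← diagonal_one, diagonal_sub]
  have hWD : diagonal (fun v ↦ (1 - q v) / d v) * diagonal d = 1 - diagonal q := by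
    simp [hQ, diagonal_mul_diagonal, hd]
  have hW : (1 - diagonal q) * (diagonal d)⁻¹ = diagonal fun v ↦ (1 - q v) / d v := by
    simp [hQ, hinv, diagonal_mul_diagonal, div_eq_mul_inv]
  rw [lazyWalkMatrix, ← mul_assoc, hW, mul_sub, hWD]
  abel

variable {d p q r : V → ℝ} {A : Matrix V V ℝ} {k : ℕ}

theorem splits_charpoly_lazyWalkMatrix (hd : ∀ v, d v ≠ 0) (hL : (diagonal d - A).PosSemidef)
    (q : V → ℝ) : (lazyWalkMatrix d A q).charpoly.Splits := by
  rw [lazyWalkMatrix_eq_one_sub hd]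
  exact splits_charpoly_one_sub_mul_posSemidef (isHermitian_diagonal _) hL

open scoped MatrixOrder in
theorem IsDecreasingRootList.le_of_lazyWalkMatrix (hd : ∀ v, 0 < d v)
    (hL : (diagonal d - A).PosSemidef) (hpq : p ≤ q) {a b : Fin k → ℝ}
    (ha : IsDecreasingRootList (lazyWalkMatrix d A p).charpoly a)
    (hb : IsDecreasingRootList (lazyWalkMatrix d A q).charpoly b) : a ≤ b := by
  rw [lazyWalkMatrix_eq_one_sub fun v ↦ (hd v).ne'] at ha hb
  refine le_of_one_sub_mul_posSemidef (isHermitian_diagonal _) (isHermitian_diagonal _) ?_ hL ha hb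
  rw [Matrix.le_iff, diagonal_sub]
  refine .diagonal fun v ↦ sub_nonneg.mpr ?_
  exact div_le_div_of_nonneg_right (sub_le_sub_left (hpq v) 1) (hd v).le

theorem stmt_5_general (hd : ∀ v, 0 < d v) (hL : (diagonal d - A).PosSemidef) (hpq : p ≤ q)
    (hqr : q ≤ r) :
    (∀ μ : ℂ, (∃ v : V → ℂ, v ≠ 0 ∧
      ((lazyWalkMatrix d A p).map Complex.ofReal).mulVec v = μ • v) → μ.im = 0) ∧
    (∀ μ : ℂ, (∃ v : V → ℂ, v ≠ 0 ∧
      ((lazyWalkMatrix d A q).map Complex.ofReal).mulVec v = μ • v) → μ.im = 0) ∧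
    (∀ μ : ℂ, (∃ v : V → ℂ, v ≠ 0 ∧
      ((lazyWalkMatrix d A r).map Complex.ofReal).mulVec v = μ • v) → μ.im = 0) ∧
    ∀ a b c : Fin k → ℝ,
      (lazyWalkMatrix d A p).charpoly.roots = Multiset.map a Finset.univ.val → Antitone a →
      (lazyWalkMatrix d A q).charpoly.roots = Multiset.map b Finset.univ.val → Antitone b →
      (lazyWalkMatrix d A r).charpoly.roots = Multiset.map c Finset.univ.val → Antitone c →
      ∀ i, a i ≤ b i ∧ b i ≤ c i := by
  have hreal (s : V → ℝ) := splits_charpoly_lazyWalkMatrix (fun v ↦ (hd v).ne') hL s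
  refine ⟨fun _ ↦ im_eq_zero_of_splits_charpoly (hreal p),
    fun _ ↦ im_eq_zero_of_splits_charpoly (hreal q),
    fun _ ↦ im_eq_zero_of_splits_charpoly (hreal r), fun a b c ha ha' hb hb' hc hc' i ↦ ⟨?_, ?_⟩⟩
  · exact IsDecreasingRootList.le_of_lazyWalkMatrix hd hL hpq ⟨ha', ha⟩ ⟨hb', hb⟩ i
  · exact IsDecreasingRootList.le_of_lazyWalkMatrix hd hL hqr ⟨hb', hb⟩ ⟨hc', hc⟩ i

end WeightedWalk

theorem stmt_5 (n : ℕ) (hn : 2 ≤ n) (G : SimpleGraph (Fin n)) [DecidableRel G.Adj]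
    (hdeg : ∀ i, 0 < G.degree i)
    (q : Fin n → ℝ) (hq : ∀ i, q i < 1)
    (qlo qhi : ℝ)
    (hqlo : (∀ i, qlo ≤ q i) ∧ ∃ i, q i = qlo)
    (hqhi : (∀ i, q i ≤ qhi) ∧ ∃ i, q i = qhi)
    (A D F0 Q FQ Flo Fhi : Matrix (Fin n) (Fin n) ℝ)
    (hA : A = G.adjMatrix ℝ)
    (hD : D = Matrix.diagonal fun i => (G.degree i : ℝ))
    (hF0 : F0 = D⁻¹ * A)
    (hQ : Q = Matrix.diagonal q)
    (hFQ : FQ = Q + (1 - Q) * F0)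
    (hFlo : Flo = qlo • (1 : Matrix (Fin n) (Fin n) ℝ) + (1 - qlo) • F0)
    (hFhi : Fhi = qhi • (1 : Matrix (Fin n) (Fin n) ℝ) + (1 - qhi) • F0) :
    (∀ μ : ℂ, (∃ v : Fin n → ℂ, v ≠ 0 ∧ (Flo.map Complex.ofReal).mulVec v = μ • v) → μ.im = 0) ∧
    (∀ μ : ℂ, (∃ v : Fin n → ℂ, v ≠ 0 ∧ (FQ.map Complex.ofReal).mulVec v = μ • v) → μ.im = 0) ∧
    (∀ μ : ℂ, (∃ v : Fin n → ℂ, v ≠ 0 ∧ (Fhi.map Complex.ofReal).mulVec v = μ • v) → μ.im = 0) ∧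
    ∀ a b c : Fin n → ℝ,
      Flo.charpoly.roots = Multiset.map a Finset.univ.val → Antitone a →
      FQ.charpoly.roots = Multiset.map b Finset.univ.val → Antitone b →
      Fhi.charpoly.roots = Multiset.map c Finset.univ.val → Antitone c →
      ∀ i, a i ≤ b i ∧ b i ≤ c i := by
  subst hA hD hF0 hQ hFQ
  rw [hFlo, hFhi, ← lazyWalkMatrix_const, ← lazyWalkMatrix_const]
  exact stmt_5_general (fun v ↦ Nat.cast_pos.mpr (hdeg v)) (G.posSemidef_lapMatrix ℝ) hqlo.1 hqhi.1
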